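/- For every integer n ≥ 2, T(n, n-2) = ((5n+1)/24)·binom(2n, 5), where binom denotes the binomial coefficient. -/

import Mathlib

/-- Stirling numbers of the first kind with level 2. -/
def T2 : ℕ → ℕ → ℕ
  | 0, 0 => 1
  | 0, _ + 1 => 0
  | _ + 1, 0 => 0
  | n + 1, m + 1 => T2 n m + n ^ 2 * T2 n (m + 1)

theorem T2_rec (n m : ℕ) : T2 (n + 1) (m + 1) = T2 n m + n ^ 2 * T2 n (m + 1) := by
  rw [T2]

theorem T2_gt (n : ℕ) : ∀ m, n < m → T2 n m = 0 := by
  induction n with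
  | zero =>
    intro m hm
    obtain ⟨k, rfl⟩ : ∃ k, m = k + 1 := ⟨m - 1, by omega⟩
    rw [T2]
  | succ n ih =>
    intro m hm
    obtain ⟨k, rfl⟩ : ∃ k, m = k + 1 := ⟨m - 1, by omega⟩
    rw [T2_rec, ih k (by omega), ih (k + 1) (by omega)]
    simp

theorem T2_diag (n : ℕ) : T2 n n = 1 := by
  induction n with
  | zero => rw [T2]
  | succ n ih => rw [T2_rec, ih, T2_gt n (n + 1) (by omega)]; simp

theorem T2_one (k : ℕ) : (T2 (k + 1) k : ℚ) = k * (k + 1) * (2 * k + 1) / 6 := by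
  induction k with
  | zero => simp [T2]
  | succ k ih =>
    rw [T2_rec, T2_diag]
    push_cast
    rw [ih]
    ring

theorem T2_two (k : ℕ) : (T2 (k + 2) k : ℚ) =
    (5 * k + 11) / 24 * ((2 * k + 4) * (2 * k + 3) * (2 * k + 2) * (2 * k + 1) * (2 * k) / 120) := by
  induction k with
  | zero => simp [T2]
  | succ k ih =>
    rw [show k + 1 + 2 = (k + 2) + 1 by ring, T2_rec]
    have h := T2_one (k + 1)
    push_cast at h ⊢
    rw [ih, show k + 2 = k + 1 + 1 by ring, h]
    ring

theorem statement19 (n : ℕ) (hn : 2 ≤ n) :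
    (T2 n (n - 2) : ℚ) = (5 * (n : ℚ) + 1) / 24 * (Nat.choose (2 * n) 5 : ℚ) := by
  obtain ⟨k, rfl⟩ : ∃ k, n = k + 2 := ⟨n - 2, by omega⟩
  have h := Nat.descFactorial_eq_factorial_mul_choose (2 * (k + 2)) 5
  have h2 : (2 * (k + 2)).descFactorial 5
      = (2 * k) * ((2 * k + 1) * ((2 * k + 2) * ((2 * k + 3) * (2 * k + 4)))) := by
    rw [show 2 * (k + 2) = 2 * k + 4 by ring]
    simp [Nat.descFactorial]
  rw [h2, show Nat.factorial 5 = 120 by rfl] at h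
  have h3 : ((2 * k) * ((2 * k + 1) * ((2 * k + 2) * ((2 * k + 3) * (2 * k + 4)))) : ℚ)
      = 120 * (Nat.choose (2 * (k + 2)) 5 : ℚ) := by exact_mod_cast h
  rw [Nat.add_sub_cancel, T2_two]
  push_cast
  linear_combination (5 * (k : ℚ) + 11) / 24 / 120 * h3
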